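/- arXiv:1410.1440 — 2 statements merged into one kernel-verified Lean document; each statement's English description precedes it below -/
import Mathlib

section
/- Define S : ℝ → ℝ by S(v) = sin(πv)/(πv) for v ≠ 0 and S(0) = 1. Then for every w ∈ ℂ with Im w ≠ 0, the function v ↦ S(v)²/(w − v) is absolutely integrable on ℝ and ∫_ℝ S(v)²/(w − v) dv = sgn(Im w)·(1 − e^{2πi·w·sgn(Im w)})/(2πi·w²) + 1/w. -/
/-!
The function `S²` is the Fourier transform of the triangle function `Λ(t) = max(0, 1 - |t|)`, and
for `Im w > 0` the Cauchy kernel `v ↦ 1/(w - v)` is `-2πi` times the Fourier transform of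
`g(t) = 1_{t > 0} e^{2πiwt}`. Since `S²` is integrable, Fourier inversion gives `𝓕(S²) = Λ`, and
moving the Fourier transform from one factor to the other gives
`∫ S²(v)/(w - v) dv = -2πi ∫ S² 𝓕g = -2πi ∫ 𝓕(S²) g = -2πi ∫₀¹ (1 - t) e^{2πiwt} dt`,
an elementary integral. The case `Im w < 0` follows by the substitution `v ↦ -v`, because `S` is
even.
-/

open MeasureTheory

/-- The sine kernel function `S(v) = sin(πv)/(πv)`, with `S(0) = 1`. -/
noncomputable def sineKernel (v : ℝ) : ℝ :=
  if v = 0 then 1 else Real.sin (Real.pi * v) / (Real.pi * v)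

open scoped FourierTransform

/-- The triangle function `Λ(t) = max(0, 1 - |t|)`, with complex values. -/
noncomputable def triangleFn (t : ℝ) : ℂ := ((max 0 (1 - |t|) : ℝ) : ℂ)

/-- The one-sided exponential `t ↦ 1_{t > 0} e^{2πiwt}`. -/
noncomputable def halfExp (w : ℂ) : ℝ → ℂ :=
  Set.indicator (Set.Ioi 0) fun t : ℝ => Complex.exp (2 * Real.pi * Complex.I * w * t)

lemma sineKernel_neg (v : ℝ) : sineKernel (-v) = sineKernel v := by
  unfold sineKernel
  by_cases h : v = 0 <;> simp [h]

lemma measurable_sineKernel : Measurable sineKernel := by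
  unfold sineKernel
  exact Measurable.ite (measurableSet_singleton 0) (by fun_prop) (by fun_prop)

lemma sineKernel_sq_le (v : ℝ) : sineKernel v ^ 2 ≤ 2 * (1 + v ^ 2)⁻¹ := by
  rw [← div_eq_mul_inv, le_div_iff₀ (by positivity)]
  unfold sineKernel
  split_ifs with h
  · simp [h]
  have hpi : 1 ≤ Real.pi ^ 2 := by nlinarith [Real.pi_gt_three]
  have hv : 0 < v ^ 2 := by positivity
  have h1 : Real.sin (Real.pi * v) ^ 2 ≤ (Real.pi * v) ^ 2 := by
    rw [sq_le_sq]
    exact Real.abs_sin_le_abs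
  have h2 : Real.sin (Real.pi * v) ^ 2 ≤ 1 := Real.sin_sq_le_one _
  rw [div_pow, div_mul_eq_mul_div, div_le_iff₀ (by positivity)]
  nlinarith

lemma integrable_sineKernel_sq : Integrable (fun v : ℝ => (sineKernel v : ℂ) ^ 2) := by
  refine (integrable_inv_one_add_sq.const_mul 2).mono' ?_ (.of_forall fun v => ?_)
  · have := measurable_sineKernel
    exact Measurable.aestronglyMeasurable (by fun_prop)
  · rw [norm_pow, Complex.norm_real, Real.norm_eq_abs, sq_abs]
    exact sineKernel_sq_le v

lemma integrable_sineKernel_sq_div (w : ℂ) (hw : w.im ≠ 0) :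
    Integrable (fun v : ℝ => (sineKernel v : ℂ) ^ 2 / (w - v)) := by
  simp_rw [div_eq_mul_inv]
  refine integrable_sineKernel_sq.mul_bdd (c := |w.im|⁻¹) ?_ (.of_forall fun v => ?_)
  · exact Measurable.aestronglyMeasurable (by fun_prop)
  · rw [norm_inv]
    have h : |w.im| ≤ ‖w - v‖ := by simpa using Complex.abs_im_le_norm (w - v)
    exact inv_anti₀ (abs_pos.mpr hw) h

lemma integral_one_sub_mul_exp (c : ℂ) (hc : c ≠ 0) :
    ∫ t in (0 : ℝ)..1, (1 - (t : ℂ)) * Complex.exp (c * t) = (Complex.exp c - 1 - c) / c ^ 2 := by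
  have h : ∀ t ∈ Set.uIcc (0 : ℝ) 1, HasDerivAt
      (fun t : ℝ => ((1 - (t : ℂ)) / c + 1 / c ^ 2) * Complex.exp (c * t))
      ((1 - (t : ℂ)) * Complex.exp (c * t)) t := by
    intro t _
    have h0 : HasDerivAt (fun t : ℝ => (t : ℂ)) 1 t := Complex.ofRealCLM.hasDerivAt
    refine ((((h0.const_sub 1).div_const c).add_const (1 / c ^ 2)).mul
      (h0.const_mul c).cexp).congr_deriv ?_
    field_simp
    ring
  rw [intervalIntegral.integral_eq_sub_of_hasDerivAt h
    (Continuous.intervalIntegrable (by fun_prop) _ _)]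
  simp
  field_simp
  ring

lemma continuous_triangleFn : Continuous triangleFn := by
  unfold triangleFn
  fun_prop

lemma triangleFn_neg (t : ℝ) : triangleFn (-t) = triangleFn t := by
  simp [triangleFn]

lemma triangleFn_eq_zero {t : ℝ} (ht : 1 ≤ |t|) : triangleFn t = 0 := by
  simp [triangleFn, ht]

lemma integrable_triangleFn_mul {f : ℝ → ℂ} (hf : Continuous f) :
    Integrable (fun t => triangleFn t * f t) := by
  refine (continuous_triangleFn.mul hf).integrable_of_hasCompactSupport ?_
  refine HasCompactSupport.intro (isCompact_Icc (a := (-1 : ℝ)) (b := 1)) fun t ht => ?_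
  rw [Pi.mul_apply, triangleFn_eq_zero, zero_mul]
  by_contra! h
  exact ht ⟨(abs_lt.mp h).1.le, (abs_lt.mp h).2.le⟩

lemma integral_Ioi_triangleFn_mul (f : ℝ → ℂ) :
    ∫ t in Set.Ioi (0 : ℝ), triangleFn t * f t = ∫ t in (0 : ℝ)..1, (1 - (t : ℂ)) * f t := by
  rw [intervalIntegral.integral_of_le zero_le_one,
    setIntegral_eq_of_subset_of_forall_sdiff_eq_zero measurableSet_Ioi
      (Set.Ioc_subset_Ioi_self : Set.Ioc (0 : ℝ) 1 ⊆ Set.Ioi 0)]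
  · refine setIntegral_congr_fun measurableSet_Ioc fun t ht => ?_
    simp [triangleFn, abs_of_pos ht.1, ht.2]
  · rintro t ⟨ht0, ht1⟩
    rw [triangleFn_eq_zero, zero_mul]
    rw [abs_of_pos ht0]
    by_contra! h
    exact ht1 ⟨ht0, h.le⟩

lemma integral_triangleFn_mul {f : ℝ → ℂ} (hf : Continuous f) :
    ∫ t, triangleFn t * f t = (∫ t in (0 : ℝ)..1, (1 - (t : ℂ)) * f (-t)) +
      ∫ t in (0 : ℝ)..1, (1 - (t : ℂ)) * f t := by
  have hi := integrable_triangleFn_mul hf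
  rw [← intervalIntegral.integral_Iic_add_Ioi hi.integrableOn hi.integrableOn (b := 0),
    integral_Ioi_triangleFn_mul, ← integral_Ioi_triangleFn_mul fun t => f (-t)]
  congr 1
  have := integral_comp_neg_Ioi 0 fun t => triangleFn t * f t
  simp only [triangleFn_neg, neg_zero] at this
  exact this.symm

lemma fourier_triangleFn : 𝓕 triangleFn = fun v : ℝ => (sineKernel v : ℂ) ^ 2 := by
  ext v
  rw [Real.fourier_real_eq_integral_exp_smul]
  have h1 : ∀ t : ℝ, Complex.exp (((-2 * Real.pi * t * v : ℝ) : ℂ) * Complex.I) • triangleFn t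
      = triangleFn t * Complex.exp ((-2 * Real.pi * v * Complex.I) * t) := by
    intro t
    rw [smul_eq_mul, mul_comm]
    congr 2
    push_cast
    ring
  simp_rw [h1]
  rw [integral_triangleFn_mul (by fun_prop)]
  by_cases hv : v = 0
  · have h2 : ∫ t in (0 : ℝ)..1, (1 - (t : ℂ)) = 1 / 2 := by
      have : ∀ t : ℝ, (1 - (t : ℂ)) = ((1 - t : ℝ) : ℂ) := by intro t; push_cast; rfl
      simp_rw [this]
      rw [intervalIntegral.integral_ofReal, intervalIntegral.integral_sub (by simp) (by simp)]
      simp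
      norm_num
    simp [hv, sineKernel, h2]
    norm_num
  · have hv' : (v : ℂ) ≠ 0 := by exact_mod_cast hv
    have hpi : (Real.pi : ℂ) ≠ 0 := by exact_mod_cast Real.pi_ne_zero
    have hc : -2 * Real.pi * v * Complex.I ≠ 0 := by simp [hv, Real.pi_ne_zero]
    have h2 : ∀ t : ℝ, -2 * (Real.pi : ℂ) * v * Complex.I * ((-t : ℝ) : ℂ)
        = (-(-2 * Real.pi * v * Complex.I)) * t := by
      intro t
      push_cast
      ring
    simp_rw [h2]
    rw [integral_one_sub_mul_exp _ hc, integral_one_sub_mul_exp _ (neg_ne_zero.mpr hc)]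
    simp only [sineKernel, hv, if_false]
    push_cast
    rw [Complex.sin]
    -- With `A = e^{-iπv}` and `B = e^{iπv}`, the claim is `A² + B² - 2 = (A - B)²`, as `A * B = 1`.
    have e1 : Complex.exp (-2 * Real.pi * v * Complex.I)
        = Complex.exp (-(Real.pi * v) * Complex.I) ^ 2 := by
      rw [← Complex.exp_nat_mul]; congr 1; push_cast; ring
    have e2 : Complex.exp (-(-2 * Real.pi * v * Complex.I))
        = Complex.exp (Real.pi * v * Complex.I) ^ 2 := by
      rw [← Complex.exp_nat_mul]; congr 1; push_cast; ring
    have e3 : Complex.exp (-(Real.pi * v) * Complex.I) * Complex.exp (Real.pi * v * Complex.I)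
        = 1 := by
      rw [← Complex.exp_add]; simp
    rw [e1, e2]
    generalize Complex.exp (-(Real.pi * v) * Complex.I) = A at *
    generalize Complex.exp (Real.pi * v * Complex.I) = B at *
    have hI : Complex.I ^ 2 = -1 := Complex.I_sq
    have hI0 : Complex.I ≠ 0 := Complex.I_ne_zero
    rw [neg_sq, ← add_div, div_pow, div_eq_div_iff (pow_ne_zero 2 hc) (by positivity)]
    simp only [mul_pow, div_pow, hI]
    linear_combination (2 * Real.pi ^ 2 * v ^ 2 : ℂ) * e3

lemma fourier_sineKernel_sq : 𝓕 (fun v : ℝ => (sineKernel v : ℂ) ^ 2) = triangleFn := by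
  have hi : Integrable triangleFn := by
    simpa using integrable_triangleFn_mul (f := fun _ => 1) continuous_const
  have h := continuous_triangleFn.fourierInv_fourier_eq hi
    (by rw [fourier_triangleFn]; exact integrable_sineKernel_sq)
  rw [fourier_triangleFn] at h
  ext s
  rw [← triangleFn_neg, ← h, Real.fourierInv_eq_fourier_neg, neg_neg]

lemma integrable_halfExp {w : ℂ} (hw : 0 < w.im) : Integrable (halfExp w) := by
  refine (integrable_indicator_iff measurableSet_Ioi).mpr
    (integrableOn_exp_mul_complex_Ioi ?_ 0)
  simp
  positivity

lemma fourier_halfExp {w : ℂ} (hw : 0 < w.im) (v : ℝ) :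
    𝓕 (halfExp w) v = -1 / (2 * Real.pi * Complex.I * (w - v)) := by
  rw [Real.fourier_real_eq_integral_exp_smul]
  have h1 : ∀ t : ℝ, Complex.exp (((-2 * Real.pi * t * v : ℝ) : ℂ) * Complex.I) • halfExp w t
      = Set.indicator (Set.Ioi 0)
        (fun t : ℝ => Complex.exp ((2 * Real.pi * Complex.I * (w - v)) * t)) t := by
    intro t
    by_cases ht : t ∈ Set.Ioi (0 : ℝ)
    · simp only [halfExp, Set.indicator_of_mem ht, smul_eq_mul]
      rw [← Complex.exp_add]
      congr 1
      push_cast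
      ring
    · simp [halfExp, Set.indicator_of_notMem ht]
  simp_rw [h1]
  rw [integral_indicator measurableSet_Ioi, integral_exp_mul_complex_Ioi]
  · simp
  · simp
    positivity

lemma integral_sineKernel_sq_div_of_pos {w : ℂ} (hw : 0 < w.im) :
    ∫ v : ℝ, (sineKernel v : ℂ) ^ 2 / (w - v)
      = (1 - Complex.exp (2 * Real.pi * Complex.I * w)) / (2 * Real.pi * Complex.I * w ^ 2)
        + 1 / w := by
  have hw0 : w ≠ 0 := by
    rintro rfl
    simp at hw
  have hpi : (Real.pi : ℂ) ≠ 0 := by exact_mod_cast Real.pi_ne_zero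
  have hI : Complex.I ≠ 0 := Complex.I_ne_zero
  have hflip : ∫ s : ℝ, 𝓕 (fun v : ℝ => (sineKernel v : ℂ) ^ 2) s • halfExp w s
      = ∫ v : ℝ, (sineKernel v : ℂ) ^ 2 • 𝓕 (halfExp w) v := by
    simpa using! VectorFourier.integral_fourierIntegral_smul_eq_flip (L := innerₗ ℝ)
      Real.continuous_fourierChar continuous_inner integrable_sineKernel_sq (integrable_halfExp hw)
  rw [fourier_sineKernel_sq] at hflip
  have hL : ∫ s : ℝ, triangleFn s • halfExp w s
      = ∫ t in (0 : ℝ)..1, (1 - (t : ℂ)) * Complex.exp (2 * Real.pi * Complex.I * w * t) := by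
    rw [← integral_Ioi_triangleFn_mul, ← integral_indicator measurableSet_Ioi]
    congr 1
    ext s
    by_cases hs : s ∈ Set.Ioi (0 : ℝ)
    · simp only [halfExp, Set.indicator_of_mem hs, smul_eq_mul]
    · simp only [halfExp, Set.indicator_of_notMem hs, smul_zero]
  have hR : ∀ v : ℝ, (sineKernel v : ℂ) ^ 2 / (w - v)
      = (-(2 * Real.pi * Complex.I)) * ((sineKernel v : ℂ) ^ 2 • 𝓕 (halfExp w) v) := by
    intro v
    have hwv : w - v ≠ 0 := by
      intro h
      have := congrArg Complex.im h
      simp at this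
      exact hw.ne' this
    rw [fourier_halfExp hw, smul_eq_mul]
    field_simp
  simp_rw [hR]
  rw [integral_const_mul, ← hflip, hL, integral_one_sub_mul_exp _ (by simp [hw0, Real.pi_ne_zero])]
  field_simp
  ring

/-- For `w ∈ ℂ` with `Im w ≠ 0`, the function `v ↦ S(v)²/(w−v)` is absolutely integrable on `ℝ`
and `∫_ℝ S(v)²/(w−v) dv = sgn(Im w)(1 − e^{2πiw·sgn(Im w)})/(2πiw²) + 1/w`. -/
theorem stmt_13 (w : ℂ) (hw : w.im ≠ 0) :
    Integrable (fun v : ℝ => ((sineKernel v : ℂ)) ^ 2 / (w - v)) ∧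
    ∫ v : ℝ, ((sineKernel v : ℂ)) ^ 2 / (w - v)
      = (Real.sign w.im : ℂ) *
          (1 - Complex.exp (2 * Real.pi * Complex.I * w * (Real.sign w.im : ℂ))) /
          (2 * Real.pi * Complex.I * w ^ 2) + 1 / w := by
  refine ⟨integrable_sineKernel_sq_div w hw, ?_⟩
  rcases hw.lt_or_gt with h | h
  · rw [← integral_neg_eq_self]
    have h1 : ∀ v : ℝ, (sineKernel (-v) : ℂ) ^ 2 / (w - ((-v : ℝ) : ℂ))
        = -((sineKernel v : ℂ) ^ 2 / (-w - v)) := by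
      intro v
      rw [sineKernel_neg, ← div_neg]
      push_cast
      congr 1
      ring
    simp_rw [h1]
    rw [integral_neg, integral_sineKernel_sq_div_of_pos (by simpa using h), Real.sign_of_neg h]
    push_cast
    rw [neg_sq, mul_neg, mul_neg_one, div_neg]
    ring
  · rw [integral_sineKernel_sq_div_of_pos h, Real.sign_of_pos h]
    simp
end

section
/- Let w ∈ ℂ with Im w ≠ 0. Then the function v ↦ (1 − e^{2πiv} + 2πiv)/(v²·(w − v)) (extended continuously at v = 0, since 1 − e^{2πiv} + 2πiv = O(v²) near 0) is absolutely integrable on ℝ, and (1/(4π²)) · ∫_ℝ (1 − e^{2πiv} + 2πiv)/(v²·(w − v)) dv equals (1 − e^{2πiw} + 2πiw)/(2πi·w²) if Im w > 0, and equals 0 if Im w < 0. -/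
/-!
Write `N z = 1 - exp (2πiz) + 2πiz` and let `F` be the entire function extending `N z / z ^ 2`
(`exists_entire_quotient`). In the closed upper half-plane `|exp (2πiz)| ≤ 1`, so `F z = O(1/|z|)`
there. By Cauchy's theorem on the rectangles `[-R, R] × [0, R]`, a function holomorphic on the closed
upper half-plane and `O(1/|z|²)` at infinity has integral zero over the real line
(`integral_real_eq_zero_of_upper`).

If `Im w < 0`, this applies directly to `F z / (w - z)`. If `Im w > 0`, the pole at `w` is removed by
subtracting a multiple of a Poisson kernel instead of indenting the contour: with `w̄ = conj w`,
`q z = F z - F w * (w - w̄) / (z - w̄)` vanishes at `w`, so `q z / (w - z)` extends holomorphically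
across `w` and has integral zero, while on the real line the subtracted part is
`-F w * 2i * Im w / |v - w|²`, whose integral is `-2πi * F w` (`integral_poisson`).
-/

open MeasureTheory

/-- Cauchy's theorem for the upper half-plane, for functions decaying like `1/|z|²`; the
integrability on the real line is part of the conclusion. -/
lemma integral_real_eq_zero_of_upper (G : ℂ → ℂ)
    (hd : DifferentiableOn ℂ G {z | 0 ≤ z.im}) (C R₀ : ℝ) (hC : 0 ≤ C) (hR₀ : 1 ≤ R₀)
    (hb : ∀ z : ℂ, 0 ≤ z.im → R₀ ≤ ‖z‖ → ‖G z‖ ≤ C / ‖z‖ ^ 2) :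
    Integrable (fun v : ℝ => G v) ∧ ∫ v : ℝ, G v = 0 := by
  have hcont : Continuous fun v : ℝ => G v := by
    rw [← continuousOn_univ]
    exact hd.continuousOn.comp Complex.continuous_ofReal.continuousOn (fun v _ => by simp)
  have hint : Integrable (fun v : ℝ => G v) := by
    obtain ⟨B, hB⟩ := (isCompact_Icc (a := -R₀) (b := R₀)).exists_bound_of_continuousOn
      (f := fun v : ℝ => G v) hcont.continuousOn
    have hB0 : 0 ≤ B := (norm_nonneg _).trans (hB 0 ⟨by linarith, by linarith⟩)
    refine Integrable.mono' (integrable_inv_one_add_sq.const_mul (B * (1 + R₀ ^ 2) + 2 * C))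
      hcont.aestronglyMeasurable (Filter.Eventually.of_forall fun v => ?_)
    rw [← div_eq_mul_inv, le_div_iff₀ (by positivity)]
    by_cases hv : |v| ≤ R₀
    · have h1 := hB v (abs_le.mp hv)
      have h2 : v ^ 2 ≤ R₀ ^ 2 := by
        rw [← sq_abs v]; gcongr
      have := mul_le_mul h1 (by linarith : 1 + v ^ 2 ≤ 1 + R₀ ^ 2) (by positivity) hB0
      linarith
    · push Not at hv
      have h1 := hb v (by simp) (by simpa using hv.le)
      rw [Complex.norm_real, Real.norm_eq_abs, sq_abs] at h1
      have h2 : 1 ≤ v ^ 2 := by rw [← sq_abs v]; nlinarith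
      rw [le_div_iff₀ (by linarith)] at h1
      have : 0 ≤ B * (1 + R₀ ^ 2) := by positivity
      nlinarith [norm_nonneg (G v)]
  refine ⟨hint, ?_⟩
  have hlim := intervalIntegral_tendsto_integral hint Filter.tendsto_neg_atTop_atBot
    Filter.tendsto_id
  refine tendsto_nhds_unique hlim ?_
  have hz : Filter.Tendsto (fun R : ℝ => 4 * C * R⁻¹) Filter.atTop (nhds 0) := by
    simpa using tendsto_inv_atTop_zero.const_mul (4 * C)
  refine squeeze_zero_norm' ?_ hz
  filter_upwards [Filter.eventually_ge_atTop R₀] with R hR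
  have hR0 : 0 < R := by linarith
  have hrect := Complex.integral_boundary_rect_eq_zero_of_differentiableOn G (-R : ℂ)
    (R + R * Complex.I) (hd.mono (by
      intro z hz
      have := hz.2
      simp [Set.uIcc_of_le hR0.le] at this
      exact this.1))
  simp at hrect
  -- on the other three sides the modulus of the point is at least `R`
  have key : ∀ z : ℂ, 0 ≤ z.im → R ≤ ‖z‖ → ‖G z‖ ≤ C / R ^ 2 := fun z h1 h2 =>
    (hb z h1 (hR.trans h2)).trans (by gcongr)
  have top := intervalIntegral.norm_integral_le_of_norm_le_const (a := -R) (b := R)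
    (f := fun x : ℝ => G (x + R * Complex.I)) (C := C / R ^ 2) (fun x _ =>
      key _ (by simp [hR0.le]) (by
        refine le_trans ?_ (Complex.abs_im_le_norm _); simp [le_abs_self]))
  have right := intervalIntegral.norm_integral_le_of_norm_le_const (a := 0) (b := R)
    (f := fun y : ℝ => G (R + y * Complex.I)) (C := C / R ^ 2) (fun y hy => by
      rw [Set.uIoc_of_le hR0.le] at hy
      exact key _ (by simp [hy.1.le]) (by
        refine le_trans ?_ (Complex.abs_re_le_norm _); simp [le_abs_self]))
  have left := intervalIntegral.norm_integral_le_of_norm_le_const (a := 0) (b := R)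
    (f := fun y : ℝ => G (-R + y * Complex.I)) (C := C / R ^ 2) (fun y hy => by
      rw [Set.uIoc_of_le hR0.le] at hy
      exact key _ (by simp [hy.1.le]) (by
        refine le_trans ?_ (Complex.abs_re_le_norm _); simp [le_abs_self]))
  have e : ∀ A T U V : ℂ, A - T + Complex.I * U - Complex.I * V = 0 →
      ‖A‖ ≤ ‖T‖ + ‖U‖ + ‖V‖ := by
    intro A T U V h
    have : A = T - Complex.I * U + Complex.I * V := by linear_combination h
    rw [this]
    refine (norm_add_le _ _).trans ?_
    have := norm_sub_le T (Complex.I * U)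
    simp at this ⊢
    linarith
  refine (e _ _ _ _ hrect).trans ?_
  have a1 : |R - -R| = 2 * R := by rw [abs_of_pos (by linarith)]; ring
  have a2 : |R - 0| = R := by rw [sub_zero, abs_of_pos hR0]
  rw [a1] at top
  rw [a2] at left right
  have : 4 * C * R⁻¹ = C / R ^ 2 * (2 * R) + C / R ^ 2 * R + C / R ^ 2 * R := by
    field_simp; ring
  rw [this]
  gcongr

lemma integral_poisson (x y : ℝ) (hy : 0 < y) :
    Integrable (fun v : ℝ => ((v - x) ^ 2 + y ^ 2)⁻¹) ∧
      ∫ v : ℝ, ((v - x) ^ 2 + y ^ 2)⁻¹ = Real.pi / y := by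
  have h : (fun v : ℝ => ((v - x) ^ 2 + y ^ 2)⁻¹)
      = fun v => (y ^ 2)⁻¹ * (fun u : ℝ => (1 + (u / y) ^ 2)⁻¹) (v - x) := by
    funext v
    rw [← mul_inv]; congr 1; field_simp; ring
  rw [h]
  constructor
  · exact ((integrable_inv_one_add_sq.comp_div hy.ne').comp_sub_right x).const_mul _
  · rw [integral_const_mul, integral_sub_right_eq_self (fun u : ℝ => (1 + (u / y) ^ 2)⁻¹) x,
      Measure.integral_comp_div (fun u : ℝ => (1 + u ^ 2)⁻¹) y, integral_univ_inv_one_add_sq,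
      abs_of_pos hy, smul_eq_mul]
    field_simp

/-- `z = 0` is a removable singularity because the numerator vanishes there to second order. The
constant `9` is an upper bound for `2 + 2π`. -/
lemma exists_entire_quotient : ∃ F : ℂ → ℂ, Differentiable ℂ F ∧
    (∀ z : ℂ, z ≠ 0 → F z = (1 - Complex.exp (2 * Real.pi * Complex.I * z)
      + 2 * Real.pi * Complex.I * z) / z ^ 2) ∧
    (∀ z : ℂ, 0 ≤ z.im → 1 ≤ ‖z‖ → ‖F z‖ ≤ 9 / ‖z‖) := by
  set N : ℂ → ℂ := fun z => 1 - Complex.exp (2 * Real.pi * Complex.I * z)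
      + 2 * Real.pi * Complex.I * z with hN
  have hNd : Differentiable ℂ N := by rw [hN]; fun_prop
  have hder : HasDerivAt N 0 0 := by
    have h1 : HasDerivAt (fun z : ℂ => 2 * Real.pi * Complex.I * z) (2 * Real.pi * Complex.I) 0 := by
      simpa using (hasDerivAt_id (0 : ℂ)).const_mul (2 * Real.pi * Complex.I)
    have h2 := (h1.cexp.const_sub 1).add h1
    refine h2.congr_deriv ?_
    simp
  have hds : ∀ {f : ℂ → ℂ}, Differentiable ℂ f → Differentiable ℂ (dslope f 0) := by
    intro f hf
    rw [← differentiableOn_univ] at hf ⊢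
    exact (Complex.differentiableOn_dslope Filter.univ_mem).mpr hf
  have hF : ∀ z : ℂ, z ≠ 0 → dslope (dslope N 0) 0 z = N z / z ^ 2 := by
    intro z hz
    have hN0 : N 0 = 0 := by simp [hN]
    rw [dslope_of_ne _ hz, slope_def_field, dslope_of_ne _ hz, slope_def_field, dslope_same,
      hder.deriv, hN0]
    field_simp
    ring
  refine ⟨dslope (dslope N 0) 0, hds (hds hNd), hF, fun z hz hz1 => ?_⟩
  have hz0 : z ≠ 0 := by
    rintro rfl
    simp at hz1
    linarith
  have hpos : 0 < ‖z‖ := by linarith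
  rw [hF z hz0, norm_div, norm_pow, div_le_div_iff₀ (by positivity) hpos]
  have hexp : ‖Complex.exp (2 * Real.pi * Complex.I * z)‖ ≤ 1 := by
    rw [Complex.norm_exp, Real.exp_le_one_iff]
    simp
    positivity
  have hlin : ‖2 * Real.pi * Complex.I * z‖ = 2 * Real.pi * ‖z‖ := by
    simp [abs_of_pos Real.pi_pos]
  have h1 : ‖N z‖ ≤ 2 + 2 * Real.pi * ‖z‖ := by
    have a := norm_add_le (1 - Complex.exp (2 * Real.pi * Complex.I * z))
      (2 * Real.pi * Complex.I * z)
    have b := norm_sub_le 1 (Complex.exp (2 * Real.pi * Complex.I * z))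
    rw [norm_one] at b
    rw [hlin] at a
    simp only [hN]
    linarith
  have h2 : ‖N z‖ ≤ 9 * ‖z‖ := by nlinarith [Real.pi_lt_d2]
  nlinarith

lemma half_norm_le_norm_sub {a z : ℂ} (h : 2 * ‖a‖ ≤ ‖z‖) : ‖z‖ / 2 ≤ ‖z - a‖ := by
  have := norm_sub_norm_le z a
  linarith

/-- Dividing a function that is `O(1/|z|)` by `w - z` gives `O(1/|z|²)`. -/
lemma norm_div_sub_le {a : ℂ} {K : ℝ} {w z : ℂ} (hz : 0 < ‖z‖) (h : 2 * ‖w‖ ≤ ‖z‖)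
    (ha : ‖a‖ ≤ K / ‖z‖) : ‖a / (w - z)‖ ≤ 2 * K / ‖z‖ ^ 2 := by
  have h1 := half_norm_le_norm_sub h
  rw [norm_div, norm_sub_rev]
  calc ‖a‖ / ‖z - w‖ ≤ (K / ‖z‖) / (‖z‖ / 2) :=
        div_le_div₀ ((norm_nonneg _).trans ha) ha (by positivity) h1
    _ = 2 * K / ‖z‖ ^ 2 := by field_simp

lemma integral_of_im_neg {w : ℂ} (hw : w.im < 0) {F : ℂ → ℂ} (hF : Differentiable ℂ F)
    (hb : ∀ z : ℂ, 0 ≤ z.im → 1 ≤ ‖z‖ → ‖F z‖ ≤ 9 / ‖z‖) :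
    Integrable (fun v : ℝ => F v / (w - v)) ∧ ∫ v : ℝ, F v / (w - v) = 0 := by
  refine integral_real_eq_zero_of_upper (fun z => F z / (w - z)) ?_ (2 * 9) (1 + 2 * ‖w‖)
    (by norm_num) (by linarith [norm_nonneg w]) ?_
  · refine hF.differentiableOn.div (by fun_prop) fun z (hz : 0 ≤ z.im) h => ?_
    rw [sub_eq_zero] at h
    rw [h] at hw
    linarith
  · intro z hz hR
    have := norm_nonneg w
    exact norm_div_sub_le (by linarith) (by linarith) (hb z hz (by linarith))

lemma integral_of_im_pos {w : ℂ} (hw : 0 < w.im) {F : ℂ → ℂ} (hF : Differentiable ℂ F)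
    (hb : ∀ z : ℂ, 0 ≤ z.im → 1 ≤ ‖z‖ → ‖F z‖ ≤ 9 / ‖z‖) :
    Integrable (fun v : ℝ => F v / (w - v)) ∧
      ∫ v : ℝ, F v / (w - v) = -(2 * Real.pi * Complex.I) * F w := by
  set w' : ℂ := starRingEnd ℂ w with hw'
  have hw'im : w'.im = -w.im := by simp [hw']
  have hw'norm : ‖w'‖ = ‖w‖ := by simp [hw']
  set A : ℂ := F w * (w - w') with hA
  have hne : ∀ z : ℂ, -w.im < z.im → z - w' ≠ 0 := by
    intro z hz h
    rw [sub_eq_zero] at h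
    rw [h, hw'im] at hz
    exact lt_irrefl _ hz
  set q : ℂ → ℂ := fun z => F z - A / (z - w') with hq
  have hqw : q w = 0 := by
    have := hne w (by linarith)
    simp only [hq, hA]
    field_simp
    ring
  have hG : ∀ z : ℂ, z ≠ w → -dslope q w z = q z / (w - z) := by
    intro z hz
    rw [dslope_of_ne _ hz, slope_def_field, hqw, sub_zero, ← neg_sub z w, div_neg]
  have hqd : DifferentiableOn ℂ q {z | -w.im < z.im} := by
    refine hF.differentiableOn.sub ((differentiableOn_const _).div (by fun_prop) hne)
  have hopen : {z : ℂ | -w.im < z.im} ∈ nhds w :=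
    (isOpen_lt continuous_const Complex.continuous_im).mem_nhds
      (show -w.im < w.im by linarith)
  have hGd := ((Complex.differentiableOn_dslope hopen).mpr hqd).neg
  obtain ⟨hi, h0⟩ := integral_real_eq_zero_of_upper (fun z => -dslope q w z)
    (hGd.mono fun z (hz : 0 ≤ z.im) => show -w.im < z.im by linarith)
    (2 * (9 + 2 * ‖A‖)) (1 + 2 * ‖w‖) (by positivity) (by linarith [norm_nonneg w]) (by
      intro z hz hR
      have hwn := norm_nonneg w
      have hz0 : 0 < ‖z‖ := by linarith
      have hzw : z ≠ w := by
        rintro rfl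
        linarith
      rw [hG z hzw]
      refine norm_div_sub_le hz0 (by linarith) ?_
      have h1 : ‖A / (z - w')‖ ≤ 2 * ‖A‖ / ‖z‖ := by
        rw [norm_div]
        calc ‖A‖ / ‖z - w'‖ ≤ ‖A‖ / (‖z‖ / 2) := by
              gcongr
              exact half_norm_le_norm_sub (by rw [hw'norm]; linarith)
          _ = 2 * ‖A‖ / ‖z‖ := by field_simp
      refine (norm_sub_le _ _).trans ?_
      rw [add_div]
      exact add_le_add (hb z hz (by linarith)) h1)
  obtain ⟨hpi, hp⟩ := integral_poisson w.re w.im hw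
  have hsplit : (fun v : ℝ => F v / (w - v)) = fun v : ℝ => -dslope q w v
      + (-A) * (((v - w.re) ^ 2 + w.im ^ 2)⁻¹ : ℝ) := by
    funext v
    have hvw : (v : ℂ) ≠ w := by
      intro h
      rw [← h] at hw
      simp at hw
    have h1 : w - v ≠ 0 := sub_ne_zero.mpr hvw.symm
    have h2 : (v : ℂ) - w' ≠ 0 := hne v (by simpa using hw)
    -- on the real line `|v - w|² = (v - w) * (v - w̄)`
    have h3 : ((((v - w.re) ^ 2 + w.im ^ 2)⁻¹ : ℝ) : ℂ) = (-((w - v) * (v - w')))⁻¹ := by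
      rw [Complex.ofReal_inv]
      congr 1
      apply Complex.ext
      · rw [Complex.ofReal_re]; simp [hw']; ring
      · rw [Complex.ofReal_im]; simp [hw']; ring
    rw [hG v hvw, h3]
    simp only [hq]
    field_simp
    ring
  have hpi' : Integrable (fun v : ℝ => ((((v - w.re) ^ 2 + w.im ^ 2)⁻¹ : ℝ) : ℂ)) := hpi.ofReal
  rw [hsplit]
  refine ⟨hi.add (hpi'.const_mul _), ?_⟩
  rw [integral_add hi (hpi'.const_mul _), h0, integral_const_mul,
    integral_complex_ofReal, hp]
  have hww : w - w' = 2 * w.im * Complex.I := by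
    apply Complex.ext <;> simp [hw']; ring
  have hy : (w.im : ℂ) ≠ 0 := by exact_mod_cast hw.ne'
  rw [hA, hww]
  push_cast
  field_simp
  ring

/-- The residue computation behind the second moment of `ξ_∞′/ξ_∞`: for `w ∈ ℂ` with
`Im w ≠ 0`, the function `v ↦ (1 − e^{2πiv} + 2πiv)/(v²(w − v))`, extended continuously at
`v = 0` (by its limit `2π²/w`), is absolutely integrable on `ℝ`, and
`(1/(4π²)) ∫_ℝ (1 − e^{2πiv} + 2πiv)/(v²(w − v)) dv` equals
`(1 − e^{2πiw} + 2πiw)/(2πiw²)` if `Im w > 0`, and `0` if `Im w < 0`. -/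
theorem stmt_18 (w : ℂ) (hw : w.im ≠ 0) (g : ℝ → ℂ)
    (hg : ∀ v : ℝ, v ≠ 0 →
      g v = (1 - Complex.exp (2 * Real.pi * Complex.I * v) + 2 * Real.pi * Complex.I * v) /
        ((v : ℂ) ^ 2 * (w - v)))
    (hg0 : g 0 = 2 * Real.pi ^ 2 / w) :
    Integrable g ∧
    (0 < w.im →
      (1 / (4 * (Real.pi : ℂ) ^ 2)) * ∫ v : ℝ, g v
        = (1 - Complex.exp (2 * Real.pi * Complex.I * w) + 2 * Real.pi * Complex.I * w) /
            (2 * Real.pi * Complex.I * w ^ 2)) ∧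
    (w.im < 0 → (1 / (4 * (Real.pi : ℂ) ^ 2)) * ∫ v : ℝ, g v = 0) := by
  obtain ⟨F, hFd, hF, hb⟩ := exists_entire_quotient
  -- `{0}` is a null set, so the value of `g` at `0` plays no role
  have hae : (fun v : ℝ => F v / (w - v)) =ᵐ[volume] g := by
    filter_upwards [compl_mem_ae_iff.mpr (measure_singleton (0 : ℝ))] with v hv
    have hv0 : v ≠ 0 := hv
    rw [hg v hv0, hF v (by exact_mod_cast hv0), div_div]
  have hw0 : w ≠ 0 := by
    rintro rfl
    simp at hw
  refine ⟨?_, fun h => ?_, fun h => ?_⟩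
  · rcases lt_or_gt_of_ne hw with h | h
    · exact (integral_of_im_neg h hFd hb).1.congr hae
    · exact (integral_of_im_pos h hFd hb).1.congr hae
  · rw [← integral_congr_ae hae, (integral_of_im_pos h hFd hb).2, hF w hw0]
    have hpi : (Real.pi : ℂ) ≠ 0 := by exact_mod_cast Real.pi_ne_zero
    have hI := Complex.I_ne_zero
    field_simp
    rw [Complex.I_sq]
    ring
  · rw [← integral_congr_ae hae, (integral_of_im_neg h hFd hb).2, mul_zero]
end
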